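/- Let Y be a subspace of X. Then Y has property-USNP if and only if for every f ∈ Y*, every x ∈ X \ Y, and all ρ, μ ∈ 𝒫 with χ_ρ^Y(f) < ∞ and χ_μ^Y(f) < ∞, one has sup_{v∈Y}[f(v) − χ_ρ^Y(f)·ρ(v+x)] = inf_{w∈Y}[−f(w) + χ_μ^Y(f)·μ(w−x)]. -/

import Mathlib

open scoped ENNReal

noncomputable section

/-- `χ_ρ(g) = sup { |g v| : ρ v ≤ 1 } ∈ [0,∞]`. -/
def chi {V : Type*} [AddCommGroup V] [Module ℝ V] [TopologicalSpace V]
    (ρ : V → ℝ) (g : V →L[ℝ] ℝ) : ℝ≥0∞ :=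
  ⨆ v ∈ {v : V | ρ v ≤ 1}, ENNReal.ofReal |g v|

/-- `χ_ρ^W(f)` for a functional `f` on a subspace `W`. -/
def chiSub {V : Type*} [AddCommGroup V] [Module ℝ V] [TopologicalSpace V]
    (W : Submodule ℝ V) (ρ : V → ℝ) (f : W →L[ℝ] ℝ) : ℝ≥0∞ :=
  chi (fun w : W => ρ (w : V)) f

/-- `ft` is a Hahn-Banach extension of the pair `(f, ρ)` on the subspace `W`. -/
def IsHBE {V : Type*} [AddCommGroup V] [Module ℝ V] [TopologicalSpace V]
    (W : Submodule ℝ V) (ρ : V → ℝ) (f : W →L[ℝ] ℝ) (ft : V →L[ℝ] ℝ) : Prop :=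
  ft.comp W.subtypeL = f ∧ chi ρ ft = chiSub W ρ f

/-- Property-USNP of a subspace `W` with respect to the family `p` of seminorms. -/
def USNP {V : Type*} [AddCommGroup V] [Module ℝ V] [TopologicalSpace V]
    {ι : Type*} (p : ι → V → ℝ) (W : Submodule ℝ V) : Prop :=
  ∀ f : W →L[ℝ] ℝ, ∃ ft : V →L[ℝ] ℝ, ∀ i, chiSub W (p i) f < ⊤ →
    IsHBE W (p i) f ft ∧ ∀ g : V →L[ℝ] ℝ, IsHBE W (p i) f g → g = ft

/-!
A Hahn–Banach extension of `(f, ρ)` is the same thing as a linear extension of `f` dominated by the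
seminorm `q_ρ = χ_ρ(f) • ρ`. By the one-step extension in the proof of the Hahn–Banach theorem, the
values `-g x` that such extensions `g` take at a point `x` outside the subspace fill exactly the
interval from `sup_v (f v - q_ρ (v + x))` to `inf_w (-f w + q_ρ (w - x))`. If one functional is the
unique extension for all `ρ`, each of these intervals is the same single point, so that the left end
for `ρ` is the right end for `μ`. Conversely, if the left end for `ρ` is the right end for `μ` and
vice versa, then the intervals for `ρ` and `μ` are one and the same point, so all extensions agree.
-/

section Sublinear

variable {V : Type*} [AddCommGroup V] [Module ℝ V] {N : V → ℝ} {f : V →ₗ.[ℝ] ℝ} {x : V}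

/-- The lower bound for `-g x` over the linear extensions `g` of `f` dominated by `N`. Bounding
`-g x` rather than `g x` matches the signs in the criterion for property-USNP. As a real supremum
it is meaningful only if `f ≤ N` on its domain. -/
def extensionLower (N : V → ℝ) (f : V →ₗ.[ℝ] ℝ) (x : V) : ℝ :=
  ⨆ v : f.domain, (f v - N (v + x))

/-- The upper bound for `-g x` over the linear extensions `g` of `f` dominated by `N`, with the
conventions of `extensionLower`. -/
def extensionUpper (N : V → ℝ) (f : V →ₗ.[ℝ] ℝ) (x : V) : ℝ :=
  ⨅ w : f.domain, (-f w + N (w - x))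

lemma sub_le_neg_add_of_subadditive (N_add : ∀ u v, N (u + v) ≤ N u + N v)
    (hf : ∀ y : f.domain, f y ≤ N y) (x : V) (v w : f.domain) :
    f v - N (v + x) ≤ -f w + N (w - x) := by
  have h : f v + f w ≤ N (v + x) + N (w - x) := calc
    f v + f w = f (v + w) := (f.map_add v w).symm
    _ ≤ N ((v + w : f.domain) : V) := hf _
    _ = N ((v + x) + (w - x)) := by rw [Submodule.coe_add]; congr 1; abel
    _ ≤ N (v + x) + N (w - x) := N_add _ _
  linarith

lemma sub_le_extensionLower (N_add : ∀ u v, N (u + v) ≤ N u + N v)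
    (hf : ∀ y : f.domain, f y ≤ N y) (x : V) (v : f.domain) :
    f v - N (v + x) ≤ extensionLower N f x :=
  le_ciSup (f := fun v : f.domain => f v - N (v + x))
    ⟨_, Set.forall_mem_range.2 fun v => sub_le_neg_add_of_subadditive N_add hf x v 0⟩ v

lemma extensionUpper_le_neg_add (N_add : ∀ u v, N (u + v) ≤ N u + N v)
    (hf : ∀ y : f.domain, f y ≤ N y) (x : V) (w : f.domain) :
    extensionUpper N f x ≤ -f w + N (w - x) :=
  ciInf_le (f := fun w : f.domain => -f w + N (w - x))
    ⟨_, Set.forall_mem_range.2 fun w => sub_le_neg_add_of_subadditive N_add hf x 0 w⟩ w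

lemma extensionLower_le_extensionUpper (N_add : ∀ u v, N (u + v) ≤ N u + N v)
    (hf : ∀ y : f.domain, f y ≤ N y) (x : V) :
    extensionLower N f x ≤ extensionUpper N f x :=
  ciSup_le fun v => le_ciInf fun w => sub_le_neg_add_of_subadditive N_add hf x v w

lemma neg_apply_mem_Icc_extensionLower_extensionUpper {g : V →ₗ[ℝ] ℝ}
    (hgf : ∀ y : f.domain, g y = f y) (hgN : ∀ v, g v ≤ N v) (x : V) :
    -g x ∈ Set.Icc (extensionLower N f x) (extensionUpper N f x) := by
  refine ⟨ciSup_le fun v => ?_, le_ciInf fun w => ?_⟩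
  · have h := hgN (v + x)
    rw [map_add, hgf] at h
    linarith
  · have h := hgN (w - x)
    rw [map_sub, hgf] at h
    linarith

lemma supSpanSingleton_le_of_neg_mem_Icc (N_hom : ∀ c : ℝ, 0 < c → ∀ v, N (c • v) = c * N v)
    (N_add : ∀ u v, N (u + v) ≤ N u + N v) (hf : ∀ y : f.domain, f y ≤ N y)
    (hx : x ∉ f.domain) {c : ℝ}
    (hc : -c ∈ Set.Icc (extensionLower N f x) (extensionUpper N f x))
    (z : (f.supSpanSingleton x c hx).domain) :
    f.supSpanSingleton x c hx z ≤ N z := by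
  obtain ⟨z, hz⟩ := z
  obtain ⟨y, hy, _, hu, rfl⟩ := Submodule.mem_sup.1 hz
  obtain ⟨t, rfl⟩ := Submodule.mem_span_singleton.1 hu
  rw [LinearPMap.supSpanSingleton_apply_mk f x c hx y hy t, smul_eq_mul]
  lift y to f.domain using hy
  obtain ht | rfl | ht := lt_trichotomy t 0
  · obtain ⟨s, hs, rfl⟩ : ∃ s : ℝ, 0 < s ∧ t = -s := ⟨-t, neg_pos.2 ht, (neg_neg t).symm⟩
    have h : f (s⁻¹ • y) - c ≤ N (s⁻¹ • y - x) := by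
      have := hc.2.trans (extensionUpper_le_neg_add N_add hf x (s⁻¹ • y))
      rw [Submodule.coe_smul] at this
      linarith
    calc f y + -s * c = s * (f (s⁻¹ • y) - c) := by
          rw [f.map_smul, smul_eq_mul]; field_simp; ring
      _ ≤ s * N (s⁻¹ • y - x) := mul_le_mul_of_nonneg_left h hs.le
      _ = N (y + -s • x) := by
          rw [← N_hom s hs, smul_sub, smul_inv_smul₀ hs.ne', neg_smul, sub_eq_add_neg]
  · simpa using hf y
  · have h : f (t⁻¹ • y) + c ≤ N (t⁻¹ • y + x) := by
      have := (sub_le_extensionLower N_add hf x (t⁻¹ • y)).trans hc.1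
      rw [Submodule.coe_smul] at this
      linarith
    calc f y + t * c = t * (f (t⁻¹ • y) + c) := by
          rw [f.map_smul, smul_eq_mul]; field_simp
      _ ≤ t * N (t⁻¹ • y + x) := mul_le_mul_of_nonneg_left h ht.le
      _ = N (y + t • x) := by rw [← N_hom t ht, smul_add, smul_inv_smul₀ ht.ne']

end Sublinear

section Seminorm

variable {V : Type*} [AddCommGroup V] [Module ℝ V]

lemma abs_apply_le_of_le_seminorm {q : Seminorm ℝ V} {g : V →ₗ[ℝ] ℝ} (h : ∀ v, g v ≤ q v)
    (v : V) : |g v| ≤ q v :=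
  abs_le'.2 ⟨h v, by simpa only [map_neg, map_neg_eq_map] using h (-v)⟩

lemma seminorm_smul_of_pos (q : Seminorm ℝ V) (c : ℝ) (hc : 0 < c) (v : V) :
    q (c • v) = c * q v := by
  rw [map_smul_eq_mul, Real.norm_of_nonneg hc.le]

lemma continuous_of_le_seminorm [TopologicalSpace V] [IsTopologicalAddGroup V]
    {q : Seminorm ℝ V} (hq : Continuous q) {g : V →ₗ[ℝ] ℝ} (h : ∀ v, g v ≤ q v) :
    Continuous g := by
  refine continuous_of_continuousAt_zero g ?_
  rw [ContinuousAt, map_zero]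
  refine squeeze_zero_norm (abs_apply_le_of_le_seminorm h) ?_
  simpa only [map_zero] using hq.tendsto 0

variable [TopologicalSpace V]

lemma chi_le_coe_iff {ρ : Seminorm ℝ V} {g : V →L[ℝ] ℝ} {K : NNReal} :
    chi ρ g ≤ K ↔ ∀ v, |g v| ≤ K * ρ v := by
  have chi_le_iff : chi ρ g ≤ K ↔ ∀ v, ρ v ≤ 1 → |g v| ≤ K := by
    simp only [chi, iSup₂_le_iff, Set.mem_ofPred_eq, ← ENNReal.ofReal_coe_nnreal,
      ENNReal.ofReal_le_ofReal_iff K.coe_nonneg]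
  rw [chi_le_iff]
  refine ⟨fun h v => le_mul_of_forall_lt₀ fun L hL t ht => ?_, fun h v hv => ?_⟩
  · have ht₀ : 0 < t := (apply_nonneg ρ v).trans_lt ht
    have hunit : ρ (t⁻¹ • v) ≤ 1 := by
      rw [seminorm_smul_of_pos ρ _ (inv_pos.2 ht₀), inv_mul_le_one₀ ht₀]
      exact ht.le
    have hK := h _ hunit
    rw [map_smul, smul_eq_mul, abs_mul, abs_of_pos (inv_pos.2 ht₀), inv_mul_le_iff₀ ht₀] at hK
    calc |g v| ≤ t * K := hK
      _ ≤ L * t := by rw [mul_comm]; gcongr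
  · exact (h v).trans (mul_le_of_le_one_right K.coe_nonneg hv)

end Seminorm

section HahnBanachExtension

variable {V : Type*} [AddCommGroup V] [Module ℝ V] [TopologicalSpace V]
  {W : Submodule ℝ V} {ρ σ : Seminorm ℝ V} {f : W →L[ℝ] ℝ} {g h : V →L[ℝ] ℝ} {x : V}

/-- The least multiple `χ_ρ^W(f) • ρ` of `ρ` dominating `f` on `W`; it is the zero seminorm when
`χ_ρ^W(f) = ∞`. -/
def dominatingSeminorm (ρ : Seminorm ℝ V) (f : W →L[ℝ] ℝ) : Seminorm ℝ V :=
  (chiSub W ρ f).toNNReal • ρ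

lemma apply_le_dominatingSeminorm (hf : chiSub W ρ f < ⊤) (w : W) :
    f w ≤ dominatingSeminorm ρ f w :=
  (le_abs_self _).trans <|
    (chi_le_coe_iff (ρ := ρ.comp W.subtype)).1 (ENNReal.coe_toNNReal hf.ne).ge w

lemma chiSub_comp_subtypeL_le_chi (W : Submodule ℝ V) (ρ : V → ℝ) (g : V →L[ℝ] ℝ) :
    chiSub W ρ (g.comp W.subtypeL) ≤ chi ρ g :=
  iSup₂_le fun w hw =>
    le_iSup₂ (f := fun v (_ : v ∈ {v : V | ρ v ≤ 1}) => ENNReal.ofReal |g v|) (w : V) hw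

lemma isHBE_iff_le_dominatingSeminorm (hf : chiSub W ρ f < ⊤) :
    IsHBE W ρ f g ↔ (∀ w : W, g w = f w) ∧ ∀ v, g v ≤ dominatingSeminorm ρ f v := by
  constructor
  · rintro ⟨hext, hchi⟩
    refine ⟨fun w => DFunLike.congr_fun hext w, fun v => (le_abs_self _).trans ?_⟩
    exact chi_le_coe_iff.1 (hchi.trans (ENNReal.coe_toNNReal hf.ne).symm).le v
  · rintro ⟨hext, hdom⟩
    obtain rfl : g.comp W.subtypeL = f := ContinuousLinearMap.ext hext
    refine ⟨rfl, le_antisymm ?_ (chiSub_comp_subtypeL_le_chi W ρ g)⟩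
    rw [← ENNReal.coe_toNNReal hf.ne, chi_le_coe_iff]
    exact abs_apply_le_of_le_seminorm (g := g.toLinearMap) hdom

lemma exists_isHBE_of_le [IsTopologicalAddGroup V] (hρ : Continuous ρ) (hf : chiSub W ρ f < ⊤)
    {F : V →ₗ.[ℝ] ℝ} (hfF : ⟨W, f.toLinearMap⟩ ≤ F)
    (hF : ∀ z : F.domain, F z ≤ dominatingSeminorm ρ f z) :
    ∃ g : V →L[ℝ] ℝ, IsHBE W ρ f g ∧ ∀ z : F.domain, g z = F z := by
  obtain ⟨g, hgF, hg⟩ := exists_extension_of_le_sublinear F (dominatingSeminorm ρ f)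
    (seminorm_smul_of_pos _) (map_add_le_add _) hF
  have hcont : Continuous (dominatingSeminorm ρ f) := hρ.const_smul (chiSub W ρ f).toNNReal
  refine ⟨⟨g, continuous_of_le_seminorm hcont hg⟩,
    (isHBE_iff_le_dominatingSeminorm hf).2 ⟨fun w => ?_, hg⟩, hgF⟩
  exact (hgF ⟨w, hfF.1 w.2⟩).trans (hfF.2 rfl).symm

lemma exists_isHBE [IsTopologicalAddGroup V] (hρ : Continuous ρ) (hf : chiSub W ρ f < ⊤) :
    ∃ g : V →L[ℝ] ℝ, IsHBE W ρ f g :=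
  (exists_isHBE_of_le hρ hf le_rfl (apply_le_dominatingSeminorm hf)).imp fun _ => And.left

/-- The left end `sup_v (f v - χ_ρ^W(f) * ρ (v + x))` of the interval of the values `-g x` over the
Hahn–Banach extensions `g` of `(f, ρ)`. -/
def hbeLower (ρ : Seminorm ℝ V) (f : W →L[ℝ] ℝ) (x : V) : ℝ :=
  extensionLower (dominatingSeminorm ρ f) ⟨W, f.toLinearMap⟩ x

/-- The right end `inf_w (-f w + χ_ρ^W(f) * ρ (w - x))` of the interval of the values `-g x` over
the Hahn–Banach extensions `g` of `(f, ρ)`. -/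
def hbeUpper (ρ : Seminorm ℝ V) (f : W →L[ℝ] ℝ) (x : V) : ℝ :=
  extensionUpper (dominatingSeminorm ρ f) ⟨W, f.toLinearMap⟩ x

lemma hbeLower_le_hbeUpper (hf : chiSub W ρ f < ⊤) (x : V) : hbeLower ρ f x ≤ hbeUpper ρ f x :=
  extensionLower_le_extensionUpper (map_add_le_add _) (apply_le_dominatingSeminorm hf) x

lemma IsHBE.neg_apply_mem_Icc (hg : IsHBE W ρ f g) (hf : chiSub W ρ f < ⊤) (x : V) :
    -g x ∈ Set.Icc (hbeLower ρ f x) (hbeUpper ρ f x) :=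
  have ⟨hext, hdom⟩ := (isHBE_iff_le_dominatingSeminorm hf).1 hg
  neg_apply_mem_Icc_extensionLower_extensionUpper (f := ⟨W, f.toLinearMap⟩)
    (g := g.toLinearMap) hext hdom x

lemma exists_isHBE_neg_apply_eq [IsTopologicalAddGroup V] (hρ : Continuous ρ)
    (hf : chiSub W ρ f < ⊤) (hx : x ∉ W) {c : ℝ}
    (hc : c ∈ Set.Icc (hbeLower ρ f x) (hbeUpper ρ f x)) :
    ∃ g : V →L[ℝ] ℝ, IsHBE W ρ f g ∧ -g x = c := by
  let F : V →ₗ.[ℝ] ℝ := ⟨W, f.toLinearMap⟩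
  have hF : ∀ z : (F.supSpanSingleton x (-c) hx).domain,
      F.supSpanSingleton x (-c) hx z ≤ dominatingSeminorm ρ f z :=
    supSpanSingleton_le_of_neg_mem_Icc (seminorm_smul_of_pos _) (map_add_le_add _)
      (apply_le_dominatingSeminorm hf) hx (by rwa [neg_neg])
  obtain ⟨g, hg, hgF⟩ := exists_isHBE_of_le hρ hf (LinearPMap.left_le_sup _ _ _) hF
  refine ⟨g, hg, neg_eq_iff_eq_neg.2 ?_⟩
  exact (hgF _).trans (F.supSpanSingleton_apply_self (-c) hx)

lemma IsHBE.eq_of_hbeLower_eq_hbeUpper (hg : IsHBE W ρ f g) (hh : IsHBE W σ f h)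
    (hfρ : chiSub W ρ f < ⊤) (hfσ : chiSub W σ f < ⊤)
    (hρσ : ∀ x ∉ W, hbeLower ρ f x = hbeUpper σ f x)
    (hσρ : ∀ x ∉ W, hbeLower σ f x = hbeUpper ρ f x) : g = h := by
  ext x
  by_cases hx : x ∈ W
  · exact DFunLike.congr_fun (hg.1.trans hh.1.symm) (⟨x, hx⟩ : W)
  · have hgx := hg.neg_apply_mem_Icc hfρ x
    have hhx := hh.neg_apply_mem_Icc hfσ x
    refine neg_injective (le_antisymm ?_ ?_)
    · calc -g x ≤ hbeUpper ρ f x := hgx.2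
        _ = hbeLower σ f x := (hσρ x hx).symm
        _ ≤ -h x := hhx.1
    · calc -h x ≤ hbeUpper σ f x := hhx.2
        _ = hbeLower ρ f x := (hρσ x hx).symm
        _ ≤ -g x := hgx.1

end HahnBanachExtension

theorem statement0_general {X : Type*} [AddCommGroup X] [Module ℝ X] [TopologicalSpace X]
    [IsTopologicalAddGroup X] {ι : Type*} {p : ι → Seminorm ℝ X} (hp : ∀ i, Continuous (p i))
    (Y : Submodule ℝ X) :
    USNP (fun i => ⇑(p i)) Y ↔
      ∀ (f : Y →L[ℝ] ℝ) (x : X), x ∉ Y →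
        ∀ i j : ι, chiSub Y (⇑(p i)) f < ⊤ → chiSub Y (⇑(p j)) f < ⊤ →
          (⨆ v : Y, (f v - (chiSub Y (⇑(p i)) f).toReal * p i ((v : X) + x))) =
            (⨅ w : Y, (-(f w) + (chiSub Y (⇑(p j)) f).toReal * p j ((w : X) - x))) := by
  change _ ↔ ∀ (f : Y →L[ℝ] ℝ) (x : X), x ∉ Y → ∀ i j : ι, chiSub Y (p i) f < ⊤ →
    chiSub Y (p j) f < ⊤ → hbeLower (p i) f x = hbeUpper (p j) f x
  refine forall_congr' fun f => ⟨fun ⟨ft, hft⟩ x hx i j hi hj => ?_, fun hgap => ?_⟩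
  · obtain ⟨g, hg, hgx⟩ := exists_isHBE_neg_apply_eq (hp i) hi hx
      (Set.left_mem_Icc.2 (hbeLower_le_hbeUpper hi x))
    obtain ⟨h, hh, hhx⟩ := exists_isHBE_neg_apply_eq (hp j) hj hx
      (Set.right_mem_Icc.2 (hbeLower_le_hbeUpper hj x))
    rw [← hgx, ← hhx, (hft i hi).2 g hg, (hft j hj).2 h hh]
  · have huniq {i j : ι} (hi : chiSub Y (p i) f < ⊤) (hj : chiSub Y (p j) f < ⊤)
        {g h : X →L[ℝ] ℝ} (hg : IsHBE Y (p i) f g) (hh : IsHBE Y (p j) f h) : g = h :=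
      hg.eq_of_hbeLower_eq_hbeUpper hh hi hj (fun x hx => hgap x hx i j hi hj)
        (fun x hx => hgap x hx j i hj hi)
    by_cases hfin : ∃ i, chiSub Y (p i) f < ⊤
    · obtain ⟨i, hi⟩ := hfin
      obtain ⟨ft, hft⟩ := exists_isHBE (hp i) hi
      refine ⟨ft, fun j hj => ⟨?_, fun g hg => huniq hj hi hg hft⟩⟩
      obtain ⟨g, hg⟩ := exists_isHBE (hp j) hj
      exact huniq hj hi hg hft ▸ hg
    · exact ⟨0, fun i hi => (hfin ⟨i, hi⟩).elim⟩

theorem statement0 {X : Type*} [AddCommGroup X] [Module ℝ X] [TopologicalSpace X]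
    {ι : Type*} [Nonempty ι] (p : SeminormFamily ℝ X ι) (hp : WithSeminorms p)
    (hdir : Directed (· ≤ ·) p) (Y : Submodule ℝ X) :
    USNP (fun i => ⇑(p i)) Y ↔
      ∀ (f : Y →L[ℝ] ℝ) (x : X), x ∉ Y →
        ∀ i j : ι, chiSub Y (⇑(p i)) f < ⊤ → chiSub Y (⇑(p j)) f < ⊤ →
          (⨆ v : Y, (f v - (chiSub Y (⇑(p i)) f).toReal * p i ((v : X) + x))) =
            (⨅ w : Y, (-(f w) + (chiSub Y (⇑(p j)) f).toReal * p j ((w : X) - x))) := by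
  have := hp.topologicalAddGroup
  exact statement0_general hp.continuous_seminorm Y
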